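/- arXiv:1101.1800 — 3 statements merged into one kernel-verified Lean document; each statement's English description precedes it below -/
import Mathlib

section
/- If x, y ∈ 𝓡 and there exists M ∈ ℕ such that |[x]_k − [y]_k| ≤ M/10^k for every k ∈ ℕ, then x ∼ y. -/
/-- The ambient space `𝓡` of decimal representations: an integer part together
with a sequence of digits in `{0,…,9}`. -/
abbrev DecimalRep := ℤ × (ℕ → Fin 10)

namespace DecimalRep

open scoped Classical

/-- The truncation `[x]_k = x₀ + ∑_{i=1}^k x_i / 10^i` of `x` up to the `k`-th
digit, as a rational number. -/
def trunc (x : DecimalRep) (k : ℕ) : ℚ :=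
  (x.1 : ℚ) + ∑ i ∈ Finset.range k, ((x.2 i : ℕ) : ℚ) / 10 ^ (i + 1)

/-- The order `⪯` on `𝓡`: `x ⪯ y` iff every truncation of `x` is at most the
corresponding truncation of `y`. -/
def le (x y : DecimalRep) : Prop := ∀ k : ℕ, trunc x k ≤ trunc y k

/-- The strict order `≺` on `𝓡`. -/
def lt (x y : DecimalRep) : Prop := le x y ∧ x ≠ y

/-- Two decimal representations are equivalent ("have no gap") iff there is no
third element lying between them. -/
def equiv (x y : DecimalRep) : Prop :=
  ¬ ∃ z : DecimalRep, z ≠ x ∧ z ≠ y ∧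
      ((le x z ∧ le z y) ∨ (le y z ∧ le z x))

/-- `𝓡₉`: decimal representations ending in an infinite string of nines. -/
def allNines (x : DecimalRep) : Prop := ∃ N : ℕ, ∀ k ≥ N, x.2 k = 9

/-- `ℚ_F`: decimal representations ending in an infinite string of zeros. -/
def finiteDec (x : DecimalRep) : Prop := ∃ N : ℕ, ∀ k ≥ N, x.2 k = 0

/-- The decimal expansion map `ι : ℚ → 𝓡`, satisfying
`[ι(α)]_k = ⌊10^k·α⌋/10^k` for all `k`. -/
def iota (α : ℚ) : DecimalRep :=
  (⌊α⌋, fun k => ⟨(⌊α * 10 ^ (k + 1)⌋ % 10).toNat, by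
    have h1 : (0 : ℤ) ≤ ⌊α * 10 ^ (k + 1)⌋ % 10 := Int.emod_nonneg _ (by norm_num)
    have h2 : ⌊α * 10 ^ (k + 1)⌋ % 10 < 10 := Int.emod_lt_of_pos _ (by norm_num)
    omega⟩)

/-- `M` is a least upper bound of `W` in `(𝓡,⪯)`. -/
def IsLub (W : Set DecimalRep) (M : DecimalRep) : Prop :=
  (∀ w ∈ W, le w M) ∧ ∀ M' : DecimalRep, (∀ w ∈ W, le w M') → le M M'

/-- `M` is a greatest lower bound of `W` in `(𝓡,⪯)`. -/
def IsGlb (W : Set DecimalRep) (M : DecimalRep) : Prop :=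
  (∀ w ∈ W, le M w) ∧ ∀ M' : DecimalRep, (∀ w ∈ W, le M' w) → le M' M

/-- The least upper bound of a set in `(𝓡,⪯)` (junk value if none exists). -/
noncomputable def sup (W : Set DecimalRep) : DecimalRep :=
  if h : ∃ M, IsLub W M then h.choose else default

/-- The greatest lower bound of a set in `(𝓡,⪯)` (junk value if none exists). -/
noncomputable def inf (W : Set DecimalRep) : DecimalRep :=
  if h : ∃ M, IsGlb W M then h.choose else default

/-- Addition `x ⊕ y := sup {ι([x]_k + [y]_k) : k ∈ ℕ}` on `𝓡`. -/
noncomputable def add (x y : DecimalRep) : DecimalRep :=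
  sup { z | ∃ k : ℕ, z = iota (trunc x k + trunc y k) }

/-- The "additive inverse" map `Ψ(x₀.x₁x₂⋯) = (−1−x₀).(9−x₁)(9−x₂)⋯`. -/
def psi (x : DecimalRep) : DecimalRep :=
  (-1 - x.1, fun k => ⟨9 - (x.2 k).val, by have := (x.2 k).isLt; omega⟩)

/-- The signal map: `0` on the nonnegative part, `1` on the negative part. -/
noncomputable def sign (x : DecimalRep) : ℕ :=
  if le (iota 0) x then 0 else 1

/-- The absolute value `‖x‖ := max {x, Ψ(x)}` with respect to `⪯`. -/
noncomputable def norm (x : DecimalRep) : DecimalRep :=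
  if le x (psi x) then psi x else x

/-- Multiplication
`x ⊗ y := Ψ^(sign x + sign y) (sup {ι([‖x‖]_k · [‖y‖]_k) : k ∈ ℕ})` on `𝓡`. -/
noncomputable def mul (x y : DecimalRep) : DecimalRep :=
  psi^[sign x + sign y]
    (sup { z | ∃ k : ℕ, z = iota (trunc (norm x) k * trunc (norm y) k) })

/-- The multiplicative inverse
`x⁻¹ := Ψ^(sign x) (inf {ι(1/[‖x‖]_k) : k ∈ ℕ, [‖x‖]_k > 0})`. -/
noncomputable def inv (x : DecimalRep) : DecimalRep :=
  psi^[sign x]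
    (inf { z | ∃ k : ℕ, 0 < trunc (norm x) k ∧ z = iota (1 / trunc (norm x) k) })

/-- A sequence of rationals is Cauchy. -/
def IsCauchy (x : ℕ → ℚ) : Prop :=
  ∀ ε : ℚ, 0 < ε → ∃ N : ℕ, ∀ m n : ℕ, N ≤ m → N ≤ n → |x m - x n| < ε

/-- The upper limit `inf { sup {f k : k ≥ n} : n ∈ ℕ }` of a sequence in `𝓡`. -/
noncomputable def upperLimit (f : ℕ → DecimalRep) : DecimalRep :=
  inf { z | ∃ n : ℕ, z = sup { w | ∃ k : ℕ, n ≤ k ∧ w = f k } }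

/-- The lower limit `sup { inf {f k : k ≥ n} : n ∈ ℕ }` of a sequence in `𝓡`. -/
noncomputable def lowerLimit (f : ℕ → DecimalRep) : DecimalRep :=
  sup { z | ∃ n : ℕ, z = inf { w | ∃ k : ℕ, n ≤ k ∧ w = f k } }

end DecimalRep

namespace DecimalRep

/-- The integer `10^k [x]_k`. -/
def scaled (x : DecimalRep) : ℕ → ℤ
  | 0 => x.1
  | k + 1 => 10 * scaled x k + ((x.2 k : ℕ) : ℤ)

lemma trunc_eq_scaled (x : DecimalRep) (k : ℕ) : trunc x k = (scaled x k : ℚ) / 10 ^ k := by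
  induction k with
  | zero => simp [trunc, scaled]
  | succ k ih =>
    have h : trunc x (k + 1) = trunc x k + ((x.2 k : ℕ) : ℚ) / 10 ^ (k + 1) := by
      simp only [trunc, Finset.sum_range_succ]
      ring
    rw [h, ih]
    simp only [scaled]
    push_cast
    field_simp
    try ring

lemma scaled_le {x y : DecimalRep} (h : le x y) (k : ℕ) : scaled x k ≤ scaled y k := by
  have := h k
  rw [trunc_eq_scaled, trunc_eq_scaled, div_le_div_iff_of_pos_right (by positivity)] at this
  exact_mod_cast this

lemma scaled_step (x y : DecimalRep) (k : ℕ) :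
    10 * (scaled y k - scaled x k) - 9 ≤ scaled y (k + 1) - scaled x (k + 1) := by
  have h1 := (x.2 k).isLt
  simp only [scaled]
  omega

lemma scaled_grow (x y : DecimalRep) (k : ℕ) (h : 2 ≤ scaled y k - scaled x k) (n : ℕ) :
    (n : ℤ) + 2 ≤ scaled y (k + n) - scaled x (k + n) := by
  induction n with
  | zero => simpa using h
  | succ n ih =>
    have := scaled_step x y (k + n)
    rw [← add_assoc]
    push_cast
    omega

lemma scaled_stay (x y : DecimalRep) (k : ℕ) (h : 1 ≤ scaled y k - scaled x k) (n : ℕ) :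
    1 ≤ scaled y (k + n) - scaled x (k + n) := by
  induction n with
  | zero => simpa using h
  | succ n ih =>
    have := scaled_step x y (k + n)
    rw [← add_assoc]
    omega

lemma scaled_inj {x y : DecimalRep} (h : ∀ k, scaled x k = scaled y k) : x = y := by
  refine Prod.ext (h 0) (funext fun k => Fin.ext ?_)
  have h1 := h k
  have h2 := h (k + 1)
  simp only [scaled] at h2
  omega

lemma exists_pos {x y : DecimalRep} (h : le x y) (hne : x ≠ y) :
    ∃ k, 1 ≤ scaled y k - scaled x k := by
  by_contra! hc
  exact hne (scaled_inj fun k => by have := scaled_le h k; have := hc k; omega)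

lemma no_between {x y z : DecimalRep} {M : ℕ}
    (hM : ∀ k, |trunc x k - trunc y k| ≤ (M : ℚ) / 10 ^ k)
    (h1 : le x z) (h2 : le z y) (hx : z ≠ x) (hy : z ≠ y) : False := by
  obtain ⟨a, ha⟩ := exists_pos h1 hx.symm
  obtain ⟨b, hb⟩ := exists_pos h2 hy
  have ha' := scaled_stay _ _ a ha b
  have hb' := scaled_stay _ _ b hb a
  rw [add_comm b a] at hb'
  have hg := scaled_grow x y (a + b) (by omega) M
  have hk := hM (a + b + M)
  rw [abs_sub_comm, trunc_eq_scaled, trunc_eq_scaled, ← sub_div] at hk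
  have hk' := (le_abs_self _).trans hk
  rw [div_le_div_iff_of_pos_right (by positivity)] at hk'
  have : scaled y (a + b + M) - scaled x (a + b + M) ≤ (M : ℤ) := by exact_mod_cast hk'
  omega

end DecimalRep

open DecimalRep in
/-- If `|[x]_k − [y]_k| ≤ M/10^k` for every `k` and some `M ∈ ℕ`,
then `x ∼ y`. -/
theorem equiv_of_trunc_close (x y : DecimalRep)
    (h : ∃ M : ℕ, ∀ k : ℕ, |trunc x k - trunc y k| ≤ (M : ℚ) / 10 ^ k) :
    equiv x y := by
  obtain ⟨M, hM⟩ := h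
  rintro ⟨z, hx, hy, ⟨h1, h2⟩ | ⟨h1, h2⟩⟩
  · exact no_between hM h1 h2 hx hy
  · exact no_between (fun k => by rw [abs_sub_comm]; exact hM k) h1 h2 hy hx
end

section
/- For all x, y ∈ 𝓡 and all k ∈ ℕ: [x]_k + [y]_k ≤ [x ⊕ y]_k, ι([x ⊕ y]_k) ⪯ x ⊕ y, and x ⊕ y ⪯ ι([x]_k + [y]_k + 2/10^k). -/
namespace DecimalRep

theorem aux_trunc_succ (x : DecimalRep) (k : ℕ) :
    trunc x (k+1) = trunc x k + ((x.2 k : ℕ) : ℚ) / 10 ^ (k + 1) := by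
  simp only [trunc, Finset.sum_range_succ]; ring

theorem aux_trunc_mono (x : DecimalRep) : Monotone (trunc x) := by
  refine monotone_nat_of_le_succ fun k => ?_
  rw [aux_trunc_succ]
  have : (0:ℚ) ≤ ((x.2 k : ℕ) : ℚ) / 10 ^ (k + 1) := by positivity
  linarith

theorem aux_trunc_anti (x : DecimalRep) : Antitone (fun k => trunc x k + 1 / 10 ^ k) := by
  refine antitone_nat_of_succ_le fun k => ?_
  simp only [aux_trunc_succ]
  have h : ((x.2 k : ℕ) : ℚ) ≤ 9 := by
    have := (x.2 k).isLt
    exact_mod_cast (by omega : (x.2 k : ℕ) ≤ 9)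
  have h2 : (((x.2 k : ℕ) : ℚ) + 1) / 10 ^ (k + 1) ≤ 10 / 10 ^ (k+1) := by
    gcongr; linarith
  have h3 : (10:ℚ) / 10 ^ (k+1) = 1 / 10 ^ k := by
    rw [pow_succ]; field_simp
  rw [add_div, h3] at h2
  linarith

theorem aux_trunc_lt (x : DecimalRep) (j k : ℕ) : trunc x k < trunc x j + 1 / 10 ^ j := by
  have h1 := aux_trunc_mono x (le_max_left k j)
  have h2 := aux_trunc_anti x (le_max_right k j)
  have h3 : (0:ℚ) < 1 / 10 ^ (max k j) := by positivity
  simp only at h2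
  linarith

theorem aux_trunc_int (x : DecimalRep) (k : ℕ) : ∃ n : ℤ, trunc x k * 10 ^ k = n := by
  induction k with
  | zero => exact ⟨x.1, by simp [trunc]⟩
  | succ k ih =>
    obtain ⟨n, hn⟩ := ih
    refine ⟨n * 10 + ((x.2 k : ℕ) : ℤ), ?_⟩
    push_cast
    rw [aux_trunc_succ, ← hn, add_mul, div_mul_cancel₀ _ (by positivity)]
    ring

def auxMk (m : ℕ → ℤ) : DecimalRep :=
  (m 0, fun k => ⟨(m (k+1) % 10).toNat, by omega⟩)

theorem aux_trunc_mk (m : ℕ → ℤ) (hm : ∀ k, m (k+1) / 10 = m k) (k : ℕ) :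
    trunc (auxMk m) k = m k / 10 ^ k := by
  induction k with
  | zero => simp [trunc, auxMk]
  | succ k ih =>
    rw [aux_trunc_succ, ih]
    have h : ((((auxMk m).2 k : ℕ) : ℤ)) = m (k+1) - 10 * m k := by
      have := hm k
      simp only [auxMk]
      omega
    have h' : ((((auxMk m).2 k : ℕ) : ℚ)) = m (k+1) - 10 * m k := by exact_mod_cast h
    rw [h', pow_succ]
    field_simp
    ring

theorem aux_floor (α : ℚ) (k : ℕ) : ⌊α * 10 ^ (k+1)⌋ / 10 = ⌊α * 10 ^ k⌋ := by
  have h1 := Int.floor_le (α * 10 ^ (k+1))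
  have h2 := Int.lt_floor_add_one (α * 10 ^ (k+1))
  have h3 := Int.floor_le (α * 10 ^ k)
  have h4 := Int.lt_floor_add_one (α * 10 ^ k)
  have e : α * 10 ^ (k+1) = 10 * (α * 10 ^ k) := by ring
  rw [e] at h1 h2 ⊢
  have h5 : ((⌊10 * (α * 10 ^ k)⌋ : ℤ) : ℚ) < 10 * (⌊α * 10 ^ k⌋ : ℤ) + 10 := by linarith
  have h6 : 10 * ((⌊α * 10 ^ k⌋ : ℤ) : ℚ) < (⌊10 * (α * 10 ^ k)⌋ : ℤ) + 1 := by linarith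
  have h7 : ⌊10 * (α * 10 ^ k)⌋ < 10 * ⌊α * 10 ^ k⌋ + 10 := by exact_mod_cast h5
  have h8 : 10 * ⌊α * 10 ^ k⌋ < ⌊10 * (α * 10 ^ k)⌋ + 1 := by exact_mod_cast h6
  omega

theorem aux_trunc_iota (α : ℚ) (k : ℕ) : trunc (iota α) k = (⌊α * 10 ^ k⌋ : ℤ) / 10 ^ k := by
  have : iota α = auxMk (fun k => ⌊α * 10 ^ k⌋) := by simp [iota, auxMk]
  rw [this, aux_trunc_mk _ (aux_floor α)]

theorem aux_iota_mono {a b : ℚ} (h : a ≤ b) : le (iota a) (iota b) := by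
  intro k
  rw [aux_trunc_iota, aux_trunc_iota]
  have : ⌊a * 10 ^ k⌋ ≤ ⌊b * 10 ^ k⌋ := Int.floor_le_floor (by gcongr)
  gcongr

theorem aux_exists_lub (a : ℕ → ℚ) (ha : Monotone a) (B : ℚ) (hB : ∀ j, a j ≤ B) :
    ∃ M, IsLub { z | ∃ k : ℕ, z = iota (a k) } M := by
  have key : ∀ k, ∃ m : ℤ, (∃ j, ⌊a j * 10 ^ k⌋ = m) ∧ ∀ z : ℤ, (∃ j, ⌊a j * 10 ^ k⌋ = z) → z ≤ m := by
    intro k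
    refine Int.exists_greatest_of_bdd ⟨⌊B * 10 ^ k⌋, ?_⟩ ⟨_, 0, rfl⟩
    rintro z ⟨j, rfl⟩
    have := hB j
    exact Int.floor_le_floor (by gcongr)
  choose m hm1 hm2 using key
  have hm2' : ∀ k j, ⌊a j * 10 ^ k⌋ ≤ m k := fun k j => hm2 k _ ⟨j, rfl⟩
  choose J hJ using hm1
  have hge : ∀ k j, J k ≤ j → ⌊a j * 10 ^ k⌋ = m k := by
    intro k j h
    refine le_antisymm (hm2' k j) ?_
    rw [← hJ k]
    have := ha h
    exact Int.floor_le_floor (by gcongr)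
  have hm : ∀ k, m (k+1) / 10 = m k := by
    intro k
    rw [← hge k _ (le_max_left (J k) (J (k+1))), ← hge (k+1) _ (le_max_right (J k) (J (k+1)))]
    exact aux_floor _ _
  refine ⟨auxMk m, ?_, ?_⟩
  · rintro w ⟨j, rfl⟩ k
    rw [aux_trunc_iota, aux_trunc_mk m hm]
    have := hm2' k j
    gcongr
  · intro M' h k
    have := h _ ⟨J k, rfl⟩ k
    rwa [aux_trunc_iota, hJ k, ← aux_trunc_mk m hm] at this

theorem aux_bound (x y : DecimalRep) (j k : ℕ) :
    trunc x j + trunc y j ≤ trunc x k + trunc y k + 2 / 10 ^ k := by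
  have h1 := aux_trunc_lt x k j
  have h2 := aux_trunc_lt y k j
  have e : (2:ℚ) / 10 ^ k = 1 / 10 ^ k + 1 / 10 ^ k := by ring
  linarith

theorem aux_add_lub (x y : DecimalRep) :
    IsLub { z | ∃ k : ℕ, z = iota (trunc x k + trunc y k) } (add x y) := by
  have h := aux_exists_lub (fun k => trunc x k + trunc y k)
    ((aux_trunc_mono x).add (aux_trunc_mono y)) _ (fun j => aux_bound x y j 0)
  unfold add sup
  rw [dif_pos h]
  exact h.choose_spec

theorem aux_iota_trunc_le (z : DecimalRep) (k : ℕ) : le (iota (trunc z k)) z := by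
  intro j
  obtain ⟨n, hn⟩ := aux_trunc_int z j
  rw [aux_trunc_iota, div_le_iff₀ (by positivity), hn]
  have h := aux_trunc_lt z j k
  have h' : trunc z k * 10 ^ j < n + 1 := by
    rw [← hn]
    calc trunc z k * 10 ^ j < (trunc z j + 1 / 10 ^ j) * 10 ^ j := by gcongr
      _ = _ := by field_simp
  have : ⌊trunc z k * 10 ^ j⌋ < n + 1 := Int.floor_lt.2 (by exact_mod_cast h')
  exact_mod_cast (by omega : ⌊trunc z k * 10 ^ j⌋ ≤ n)

end DecimalRep

open DecimalRep in
/-- `[x]_k + [y]_k ≤ [x ⊕ y]_k`, `ι([x ⊕ y]_k) ⪯ x ⊕ y`, and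
`x ⊕ y ⪯ ι([x]_k + [y]_k + 2/10^k)`. -/
theorem add_trunc_estimates (x y : DecimalRep) (k : ℕ) :
    trunc x k + trunc y k ≤ trunc (add x y) k ∧
    le (iota (trunc (add x y) k)) (add x y) ∧
    le (add x y) (iota (trunc x k + trunc y k + 2 / 10 ^ k)) := by
  obtain ⟨h1, h2⟩ := aux_add_lub x y
  refine ⟨?_, aux_iota_trunc_le _ _, ?_⟩
  · refine le_trans (le_of_eq ?_) (h1 _ ⟨k, rfl⟩ k)
    obtain ⟨n, hn⟩ := aux_trunc_int x k
    obtain ⟨n', hn'⟩ := aux_trunc_int y k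
    have e : (trunc x k + trunc y k) * 10 ^ k = ((n + n' : ℤ) : ℚ) := by
      rw [add_mul, hn, hn']; push_cast; rfl
    rw [aux_trunc_iota, eq_div_iff (by positivity), e, Int.floor_intCast]
  · apply h2
    rintro w ⟨j, rfl⟩
    exact aux_iota_mono (aux_bound x y j k)
end

section
/- For all x, y, z, w ∈ 𝓡 with x ∼ z and y ∼ w, one has x ⊕ y ∼ z ⊕ w. -/
namespace DecimalRep

def TT (x : DecimalRep) : ℕ → ℤ
  | 0 => x.1
  | k+1 => 10 * TT x k + ((x.2 k : ℕ) : ℤ)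

lemma trunc_eq (x : DecimalRep) (k : ℕ) : trunc x k = (TT x k : ℚ) / 10 ^ k := by
  induction k with
  | zero => simp [trunc, TT]
  | succ k ih =>
    have : trunc x (k+1) = trunc x k + ((x.2 k : ℕ) : ℚ) / 10 ^ (k + 1) := by
      simp only [trunc, Finset.sum_range_succ]; ring
    rw [this, ih]
    simp only [TT]
    push_cast
    field_simp
    ring

lemma le_iff (x y : DecimalRep) : le x y ↔ ∀ k, TT x k ≤ TT y k := by
  unfold le
  refine forall_congr' fun k => ?_
  rw [trunc_eq, trunc_eq, div_le_div_iff_of_pos_right (by positivity)]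
  exact_mod_cast Iff.rfl

lemma TT_lo (x : DecimalRep) (k : ℕ) : 10 * TT x k ≤ TT x (k+1) := by
  simp only [TT]; omega

lemma TT_hi (x : DecimalRep) (k : ℕ) : TT x (k+1) ≤ 10 * TT x k + 9 := by
  have := (x.2 k).isLt
  simp only [TT]; omega

lemma ext_TT {x y : DecimalRep} (h : ∀ k, TT x k = TT y k) : x = y := by
  refine Prod.ext (h 0) (funext fun k => Fin.ext ?_)
  have h1 := h k
  have h2 := h (k+1)
  simp only [TT] at h2
  omega

lemma exists_TT (g : ℕ → ℤ) (h1 : ∀ k, 10 * g k ≤ g (k+1)) (h2 : ∀ k, g (k+1) ≤ 10 * g k + 9) :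
    ∃ x : DecimalRep, ∀ k, TT x k = g k := by
  refine ⟨(g 0, fun k => ⟨(g (k+1) - 10 * g k).toNat, by have := h1 k; have := h2 k; omega⟩), ?_⟩
  intro k
  induction k with
  | zero => rfl
  | succ k ih =>
    simp only [TT, ih]
    have := h1 k
    omega

lemma TT_strict {x y : DecimalRep} {k n : ℕ} (hn : k ≤ n) (h : TT x k < TT y k) :
    TT x n < TT y n := by
  induction n, hn using Nat.le_induction with
  | base => exact h
  | succ n hn ih =>
    have := TT_hi x n
    have := TT_lo y n
    omega

noncomputable def lo (x : DecimalRep) (k : ℕ) : ℝ := (TT x k : ℝ) / 10 ^ k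

noncomputable def hi (x : DecimalRep) (k : ℕ) : ℝ := ((TT x k : ℝ) + 1) / 10 ^ k

lemma lo_mono (x : DecimalRep) : Monotone (lo x) := by
  refine monotone_nat_of_le_succ fun k => ?_
  unfold lo
  have : (10 * TT x k : ℝ) ≤ TT x (k+1) := by exact_mod_cast TT_lo x k
  rw [div_le_div_iff₀ (by positivity) (by positivity), pow_succ]
  nlinarith [show (0:ℝ) < 10 ^ k by positivity]

lemma hi_anti (x : DecimalRep) : Antitone (hi x) := by
  refine antitone_nat_of_succ_le fun k => ?_
  unfold hi
  have : (TT x (k+1) : ℝ) ≤ 10 * TT x k + 9 := by exact_mod_cast TT_hi x k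
  rw [div_le_div_iff₀ (by positivity) (by positivity), pow_succ]
  nlinarith [show (0:ℝ) < 10 ^ k by positivity]

lemma lo_le_hi (x : DecimalRep) (m n : ℕ) : lo x m ≤ hi x n := by
  refine (lo_mono x (le_max_left m n)).trans (le_trans ?_ (hi_anti x (le_max_right m n)))
  unfold lo hi
  gcongr
  linarith

noncomputable def val (x : DecimalRep) : ℝ := ⨆ k, lo x k

lemma lo_le_val (x : DecimalRep) (k : ℕ) : lo x k ≤ val x :=
  le_ciSup (f := lo x) ⟨hi x 0, by rintro _ ⟨m, rfl⟩; exact lo_le_hi x m 0⟩ k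

lemma val_le_of {x : DecimalRep} {r : ℝ} (h : ∀ k, lo x k ≤ r) : val x ≤ r := ciSup_le h

lemma val_le_hi (x : DecimalRep) (k : ℕ) : val x ≤ hi x k := val_le_of fun m => lo_le_hi x m k

lemma val_mono {x y : DecimalRep} (h : le x y) : val x ≤ val y := by
  refine val_le_of fun k => le_trans ?_ (lo_le_val y k)
  have : (TT x k : ℝ) ≤ TT y k := by exact_mod_cast (le_iff x y).1 h k
  unfold lo
  gcongr

lemma le_of_val_lt {x y : DecimalRep} (h : val x < val y) : le x y := by
  rw [le_iff]
  intro k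
  by_contra! hc
  have h1 : (TT y k : ℝ) + 1 ≤ TT x k := by exact_mod_cast hc
  have h2 : hi y k ≤ lo x k := by unfold lo hi; gcongr
  linarith [val_le_hi y k, lo_le_val x k]

lemma TT_le_add_one {x y : DecimalRep} (h : val y ≤ val x) (k : ℕ) : TT y k ≤ TT x k + 1 := by
  have h1 : lo y k ≤ hi x k := (lo_le_val y k).trans (h.trans (val_le_hi x k))
  unfold lo hi at h1
  rw [div_le_div_iff_of_pos_right (by positivity)] at h1
  exact_mod_cast h1

lemma TT_iota (a : ℚ) (k : ℕ) : TT (iota a) k = ⌊a * 10 ^ k⌋ := by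
  induction k with
  | zero => simp [TT, iota]
  | succ k ih =>
    have h1 : ⌊a * 10 ^ (k+1)⌋ / 10 = ⌊a * 10 ^ k⌋ := by
      have := Int.floor_div_natCast (a * 10 ^ (k+1)) 10
      have e : a * 10 ^ (k+1) / ((10:ℕ):ℚ) = a * 10 ^ k := by push_cast; rw [pow_succ]; field_simp
      rw [e] at this
      exact_mod_cast this.symm
    simp only [TT, ih]
    simp only [iota]
    omega

lemma val_iota (a : ℚ) : val (iota a) = a := by
  apply le_antisymm
  · refine val_le_of fun k => ?_
    unfold lo
    rw [TT_iota, div_le_iff₀ (by positivity)]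
    exact_mod_cast Int.floor_le (a * 10 ^ k)
  · refine le_of_forall_pos_le_add fun ε hε => ?_
    obtain ⟨k, hk⟩ := exists_pow_lt_of_lt_one hε (show (1/10:ℝ) < 1 by norm_num)
    have h1 := lo_le_val (iota a) k
    have h2 : (a:ℝ) ≤ hi (iota a) k := by
      unfold hi
      rw [TT_iota, le_div_iff₀ (by positivity)]
      exact_mod_cast (Int.lt_floor_add_one (a * 10 ^ k)).le
    have h3 : hi (iota a) k = lo (iota a) k + (1/10)^k := by
      unfold hi lo; rw [add_div, one_div_pow]
    linarith

lemma equiv_iff (x y : DecimalRep) : equiv x y ↔ val x = val y := by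
  constructor
  · intro h
    by_contra hne
    apply h
    rcases lt_or_gt_of_ne hne with hl | hl
    all_goals
      obtain ⟨q, hq1, hq2⟩ := exists_rat_btwn hl
      rw [← val_iota q] at hq1 hq2
      refine ⟨iota q, fun e => ?_, fun e => ?_, ?_⟩
      · rw [e] at hq1 hq2; exact lt_irrefl _ (by assumption)
      · rw [e] at hq1 hq2; exact lt_irrefl _ (by assumption)
    · exact Or.inl ⟨le_of_val_lt hq1, le_of_val_lt hq2⟩
    · exact Or.inr ⟨le_of_val_lt hq1, le_of_val_lt hq2⟩
  · have key : ∀ x y z : DecimalRep, val x = val y → z ≠ x → z ≠ y → le x z → le z y → False := by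
      intro x y z h hx hy h1 h2
      have s : ∀ a b : DecimalRep, a ≠ b → le a b → ∃ k, TT a k < TT b k := by
        intro a b hab hle
        by_contra! hc
        exact hab (ext_TT fun k => le_antisymm ((le_iff a b).1 hle k) (hc k))
      obtain ⟨k, hk⟩ := s x z hx.symm h1
      obtain ⟨m, hm⟩ := s z y hy h2
      have a1 := TT_strict (le_max_left k m) hk
      have a2 := TT_strict (le_max_right k m) hm
      have a3 := TT_le_add_one h.ge (max k m)
      omega
    rintro h ⟨z, hx, hy, ⟨h1, h2⟩ | ⟨h1, h2⟩⟩
    · exact key x y z h hx hy h1 h2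
    · exact key y x z h.symm hy hx h1 h2

lemma exists_lub (W : Set DecimalRep) (hW : W.Nonempty) (B : DecimalRep) (hB : ∀ w ∈ W, le w B) :
    ∃ M, IsLub W M := by
  have H : ∀ k, ∃ g : ℤ, (∃ w ∈ W, TT w k = g) ∧ ∀ z, (∃ w ∈ W, TT w k = z) → z ≤ g := by
    intro k
    refine Int.exists_greatest_of_bdd ⟨TT B k, ?_⟩ ?_
    · rintro z ⟨w, hw, rfl⟩
      exact (le_iff w B).1 (hB w hw) k
    · obtain ⟨w, hw⟩ := hW
      exact ⟨_, w, hw, rfl⟩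
  choose g hg1 hg2 using H
  obtain ⟨M, hM⟩ := exists_TT g
    (fun k => by
      obtain ⟨w, hw, e⟩ := hg1 k
      have := hg2 (k+1) _ ⟨w, hw, rfl⟩
      have := TT_lo w k
      omega)
    (fun k => by
      obtain ⟨w, hw, e⟩ := hg1 (k+1)
      have := hg2 k _ ⟨w, hw, rfl⟩
      have := TT_hi w k
      omega)
  refine ⟨M, fun w hw => (le_iff _ _).2 fun k => ?_, fun M' h' => (le_iff _ _).2 fun k => ?_⟩
  · rw [hM]; exact hg2 k _ ⟨w, hw, rfl⟩
  · obtain ⟨w, hw, e⟩ := hg1 k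
    rw [hM, ← e]; exact (le_iff _ _).1 (h' w hw) k

lemma trunc_cast (x : DecimalRep) (k : ℕ) : ((trunc x k : ℚ) : ℝ) = lo x k := by
  rw [trunc_eq, lo]; push_cast; rfl

lemma val_add (x y : DecimalRep) : val (add x y) = val x + val y := by
  have ub : ∀ q : ℚ, val x + val y < q →
      ∀ w ∈ { z | ∃ k : ℕ, z = iota (trunc x k + trunc y k) }, le w (iota q) := by
    rintro q hq w ⟨k, rfl⟩
    apply le_of_val_lt
    rw [val_iota, val_iota]
    push_cast
    rw [trunc_cast, trunc_cast]
    linarith [lo_le_val x k, lo_le_val y k]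
  have hex : ∃ M, IsLub { z | ∃ k : ℕ, z = iota (trunc x k + trunc y k) } M := by
    obtain ⟨q, hq⟩ := exists_rat_gt (val x + val y)
    exact exists_lub _ ⟨_, 0, rfl⟩ (iota q) (ub q hq)
  have hl : IsLub { z | ∃ k : ℕ, z = iota (trunc x k + trunc y k) } (add x y) := by
    unfold add sup
    rw [dif_pos hex]
    exact hex.choose_spec
  apply le_antisymm
  · by_contra! hc
    obtain ⟨q, h1, h2⟩ := exists_rat_btwn hc
    have := val_mono (hl.2 _ (ub q h1))
    rw [val_iota] at this
    linarith
  · have h : ∀ k, lo x k + lo y k ≤ val (add x y) := by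
      intro k
      have := val_mono (hl.1 _ ⟨k, rfl⟩)
      rw [val_iota] at this
      push_cast at this
      rwa [trunc_cast, trunc_cast] at this
    have h2 : ∀ m n, lo x m + lo y n ≤ val (add x y) := fun m n => by
      have := h (max m n)
      have := lo_mono x (le_max_left m n)
      have := lo_mono y (le_max_right m n)
      linarith
    have h3 : ∀ n, val x ≤ val (add x y) - lo y n := fun n => val_le_of fun m => by
      linarith [h2 m n]
    have h4 : val y ≤ val (add x y) - val x := val_le_of fun n => by linarith [h3 n]
    linarith

end DecimalRep

open DecimalRep in
/-- Addition on `𝓡` respects the equivalence `∼`. -/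
theorem add_equiv_add (x y z w : DecimalRep) (hxz : equiv x z) (hyw : equiv y w) :
    equiv (add x y) (add z w) := by
  rw [equiv_iff] at *
  rw [val_add, val_add, hxz, hyw]
end
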